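/- In $\Lambda_\oplus$ with call-by-value evaluation, let $M=\lambda x.\lambda y.(\Omega\oplus I)$ and $N=\lambda x.((\lambda y.\Omega)\oplus(\lambda y.I))$, and $L=\lambda y.(\Omega\oplus I)$, $L_0=\lambda y.\Omega$, $L_1=\lambda y.I$. Suppose $P$ is a term and $P[M/x, L/\bar y]$ converges with probability $p$ (where $\bar y = y_1,\dots,y_n$ and $L/\bar y$ substitutes $L$ for each $y_i$). Then for every bit-vector $b\in\{0,1\}^n$ there is $p_b$ such that $P[N/x, L_b/\bar y]$ converges with probability $p_b$, and $\sum_{b\in\{0,1\}^n} p_b/2^n \ge p$. In particular (case $n=0$), for every term $P$ with one free variable $x$, the convergence probability of $P[M/x]$ is at most that of $P[N/x]$. -/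

import Mathlib

open scoped ENNReal

namespace LamPlus

/-- Terms of the pure untyped probabilistic λ-calculus `Λ⊕` (de Bruijn). -/
inductive LTm : Type
  | var (n : ℕ)
  | lam (M : LTm)
  | app (M N : LTm)
  | choice (M N : LTm)
deriving DecidableEq

/-- Values of `Λ⊕` (call-by-value): abstractions. -/
inductive IsVal : LTm → Prop
  | lam (M) : IsVal (.lam M)

/-- Substitution of the closed term `s` for the variable `k`. -/
def subst : LTm → ℕ → LTm → LTm
  | .var n, k, s => if n = k then s else if k < n then .var (n - 1) else .var n
  | .lam M, k, s => .lam (subst M (k + 1) s)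
  | .app M N, k, s => .app (subst M k s) (subst N k s)
  | .choice M N, k, s => .choice (subst M k s) (subst N k s)

/-- Simultaneous substitution of a list of closed terms for variables `0, 1, …`. -/
def msubst : LTm → List LTm → LTm
  | M, [] => M
  | M, V :: vs => msubst (subst M 0 V) vs

/-- `P` has all its free variables below `k`. -/
def ClosedUnder : ℕ → LTm → Prop
  | k, .var n => n < k
  | k, .lam M => ClosedUnder (k + 1) M
  | k, .app M N => ClosedUnder k M ∧ ClosedUnder k N
  | k, .choice M N => ClosedUnder k M ∧ ClosedUnder k N

/-- One-step reduction of a closed term to a sequence of terms (probabilistic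
branching for `⊕`), closed under call-by-value evaluation contexts. -/
inductive Red : LTm → List LTm → Prop
  | beta {M V : LTm} : IsVal V → Red (.app (.lam M) V) [subst M 0 V]
  | choice (M N : LTm) : Red (.choice M N) [M, N]
  | appL {M : LTm} {Ns : List LTm} (L : LTm) : Red M Ns →
      Red (.app M L) (Ns.map fun N => .app N L)
  | appR {V M : LTm} {Ns : List LTm} : IsVal V → Red M Ns →
      Red (.app V M) (Ns.map fun N => .app V N)

/-- Small-step approximation semantics `M ⇒ 𝒟` of `Λ⊕`. -/
inductive SEval : LTm → (LTm → ℝ≥0∞) → Prop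
  | empty (M) : SEval M 0
  | val {V} : IsVal V → SEval V (fun W => if W = V then 1 else 0)
  | step {M : LTm} {Ns : List LTm} {D : ℕ → LTm → ℝ≥0∞} : Red M Ns →
      (∀ i : Fin Ns.length, SEval (Ns.get i) (D i)) →
      SEval M (fun b => (Ns.length : ℝ≥0∞)⁻¹ * ∑ i : Fin Ns.length, D i b)

/-- `M` converges with probability `p`: some approximation has total mass `p`. -/
def Conv (M : LTm) (p : ℝ≥0∞) : Prop := ∃ D, SEval M D ∧ (∑' V, D V) = p

/-- The identity `I = λx.x`. -/
def Idt : LTm := .lam (.var 0)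

/-- The diverging term `Ω = (λx.xx)(λx.xx)`. -/
def Om : LTm := .app (.lam (.app (.var 0) (.var 0))) (.lam (.app (.var 0) (.var 0)))

/-- `L₀ = λy.Ω`. -/
def L0 : LTm := .lam Om

/-- `L₁ = λy.I`. -/
def L1 : LTm := .lam Idt

/-- `L = λy.(Ω ⊕ I)`. -/
def Lt : LTm := .lam (.choice Om Idt)

/-- `M = λx.λy.(Ω ⊕ I)`. -/
def Mt : LTm := .lam (.lam (.choice Om Idt))

/-- `N = λx.((λy.Ω) ⊕ (λy.I))`. -/
def Nt : LTm := .lam (.choice (.lam Om) (.lam Idt))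

end LamPlus

namespace LamPlus

/-- Deterministic one-step function. -/
def stp : LTm → Option (List LTm)
  | .var _ => none
  | .lam _ => none
  | .choice A B => some [A, B]
  | .app (.lam M) (.lam N) => some [subst M 0 (.lam N)]
  | .app (.lam M) B => (stp B).map (List.map (fun N => .app (.lam M) N))
  | .app A B => (stp A).map (List.map (fun N => .app N B))

theorem stp_appL {A : LTm} {Ns : List LTm} (B : LTm) (h : stp A = some Ns) :
    stp (.app A B) = some (Ns.map fun N => .app N B) := by
  cases A with
  | lam M => simp [stp] at h
  | var n => simp [stp] at h
  | app A1 A2 => simp [stp, h]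
  | choice A1 A2 => simp only [stp] at h ⊢; simp at h; simp [h]

theorem stp_appR {B : LTm} {Ns : List LTm} (M : LTm) (h : stp B = some Ns) :
    stp (.app (.lam M) B) = some (Ns.map fun N => .app (.lam M) N) := by
  cases B with
  | lam M => simp [stp] at h
  | var n => simp [stp] at h
  | app A1 A2 => simp [stp, h]
  | choice A1 A2 => simp only [stp] at h ⊢; simp at h; simp [h]

theorem stp_of_red {M : LTm} {Ns : List LTm} (h : Red M Ns) : stp M = some Ns := by
  induction h with
  | beta hV => cases hV; simp [stp]
  | choice => simp [stp]
  | appL L _ ih => exact stp_appL L ih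
  | appR hV _ ih => cases hV; exact stp_appR _ ih

theorem red_of_stp {M : LTm} : ∀ {Ns : List LTm}, stp M = some Ns → Red M Ns := by
  induction M with
  | var n => intro Ns h; simp [stp] at h
  | lam n => intro Ns h; simp [stp] at h
  | choice A B => intro Ns h; simp [stp] at h; subst h; exact .choice _ _
  | app A B ihA ihB =>
    intro Ns h
    by_cases hA : ∃ M, A = .lam M
    · obtain ⟨M, rfl⟩ := hA
      by_cases hB : ∃ N, B = .lam N
      · obtain ⟨N, rfl⟩ := hB
        simp [stp] at h
        subst h
        exact .beta (.lam _)
      · cases hs : stp B with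
        | none =>
          cases B <;> simp_all [stp]
        | some l =>
          rw [stp_appR M hs] at h
          simp at h; subst h
          exact .appR (.lam _) (ihB hs)
    · cases hs : stp A with
      | none => cases A <;> simp_all [stp]
      | some l =>
        rw [stp_appL B hs] at h
        simp at h; subst h
        exact .appL _ (ihA hs)

/-- Indicator of values. -/
noncomputable def vl : LTm → ℝ≥0∞
  | .lam _ => 1
  | _ => 0

/-- Convergence within `k` steps. -/
noncomputable def pr : ℕ → LTm → ℝ≥0∞
  | 0, _ => 0
  | k + 1, M => match stp M with
    | some Ns => (Ns.length : ℝ≥0∞)⁻¹ * ∑ i : Fin Ns.length, pr k (Ns.get i)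
    | none => vl M

theorem pr_some {M Ns} (k : ℕ) (h : stp M = some Ns) :
    pr (k + 1) M = (Ns.length : ℝ≥0∞)⁻¹ * ∑ i : Fin Ns.length, pr k (Ns.get i) := by
  rw [pr]; simp only [h]

theorem pr_lam (k : ℕ) (M : LTm) : pr (k + 1) (.lam M) = 1 := by
  rw [pr]; simp [stp, vl]

theorem pr_mono_succ (k : ℕ) : ∀ M, pr k M ≤ pr (k + 1) M := by
  induction k with
  | zero => intro M; simp [pr]
  | succ k ih =>
    intro M
    cases h : stp M with
    | some Ns =>
      rw [pr_some _ h, pr_some _ h]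
      gcongr
      exact ih _
    | none => rw [pr, pr]; simp only [h]; exact le_rfl

theorem pr_mono {k l : ℕ} (h : k ≤ l) (M : LTm) : pr k M ≤ pr l M :=
  monotone_nat_of_le_succ (f := fun k => pr k M) (fun k => pr_mono_succ k M) h

theorem conv_pr (k : ℕ) : ∀ M, Conv M (pr k M) := by
  induction k with
  | zero => intro M; exact ⟨0, .empty M, by simp [pr]⟩
  | succ k ih =>
    intro M
    cases h : stp M with
    | some Ns =>
      rw [pr_some _ h]
      choose D hD hs using ih
      refine ⟨_, .step (D := fun n => if h : n < Ns.length then D (Ns.get ⟨n, h⟩) else 0)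
        (red_of_stp h) ?_, ?_⟩
      · intro i; simpa using hD _
      · rw [ENNReal.tsum_mul_left, Summable.tsum_finsetSum (fun _ _ => ENNReal.summable)]
        congr 1
        refine Finset.sum_congr rfl fun i _ => ?_
        rw [← hs]
        simp
    | none =>
      cases M with
      | lam M => rw [pr_lam]; exact ⟨_, .val (.lam M), by simp⟩
      | var n => exact ⟨0, .empty _, by simp [pr, stp, vl]⟩
      | choice A B => exact ⟨0, .empty _, by simp [pr, h, vl]⟩
      | app A B => exact ⟨0, .empty _, by simp [pr, h, vl]⟩

theorem le_pr {M D} (h : SEval M D) : ∃ k, (∑' V, D V) ≤ pr k M := by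
  induction h with
  | empty => exact ⟨0, by simp⟩
  | val hV => cases hV; exact ⟨1, by simp [pr_lam]⟩
  | @step M Ns D hr _ ih =>
    choose f hf using ih
    refine ⟨Finset.univ.sup f + 1, ?_⟩
    rw [pr_some _ (stp_of_red hr), ENNReal.tsum_mul_left,
      Summable.tsum_finsetSum (fun _ _ => ENNReal.summable)]
    gcongr with i
    exact (hf i).trans (pr_mono (Finset.le_sup (Finset.mem_univ i)) _)

/-- Evaluation contexts. -/
inductive EC : (LTm → LTm) → Prop
  | id : EC (fun R => R)
  | appL {c} (L) : EC c → EC (fun R => .app (c R) L)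
  | appR {c} (M) : EC c → EC (fun R => .app (.lam M) (c R))

theorem EC.stp {c} (hc : EC c) {R Ns} (h : stp R = some Ns) :
    stp (c R) = some (Ns.map c) := by
  induction hc with
  | id => simpa using h
  | appL L _ ih => rw [stp_appL L ih]; simp
  | appR M _ ih => rw [stp_appR M ih]; simp

theorem EC.pr_one {c} (hc : EC c) {R A} (k : ℕ) (h : LamPlus.stp R = some [A]) :
    pr (k + 1) (c R) = pr k (c A) := by
  rw [pr_some k (hc.stp h)]; simp

theorem EC.pr_choice {c} (hc : EC c) (A B) (k : ℕ) :
    pr (k + 1) (c (.choice A B)) = 2⁻¹ * (pr k (c A) + pr k (c B)) := by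
  rw [pr_some (Ns := [c A, c B]) k (hc.stp (R := .choice A B) (by rw [LamPlus.stp]))]
  simp [Fin.sum_univ_two]

theorem EC.pr_Om {c} (hc : EC c) (k : ℕ) : pr k (c Om) = 0 := by
  induction k with
  | zero => simp [pr]
  | succ k ih => rw [hc.pr_one (A := Om) k (by simp [Om, LamPlus.stp, subst]), ih]

/-- Annotated terms. -/
inductive ATm : Type
  | var (n : ℕ)
  | lam (M : ATm)
  | app (M N : ATm)
  | choice (M N : ATm)
  | hM
  | hL (i : ℕ)

def tr (m : LTm) (l : ℕ → LTm) : ATm → LTm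
  | .var n => .var n
  | .lam A => .lam (tr m l A)
  | .app A B => .app (tr m l A) (tr m l B)
  | .choice A B => .choice (tr m l A) (tr m l B)
  | .hM => m
  | .hL i => l i

def asubst : ATm → ℕ → ATm → ATm
  | .var n, k, s => if n = k then s else if k < n then .var (n - 1) else .var n
  | .lam M, k, s => .lam (asubst M (k + 1) s)
  | .app M N, k, s => .app (asubst M k s) (asubst N k s)
  | .choice M N, k, s => .choice (asubst M k s) (asubst N k s)
  | .hM, _, _ => .hM
  | .hL i, _, _ => .hL i

def AClosed : ℕ → ATm → Prop
  | k, .var n => n < k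
  | k, .lam M => AClosed (k + 1) M
  | k, .app M N => AClosed k M ∧ AClosed k N
  | k, .choice M N => AClosed k M ∧ AClosed k N
  | _, .hM => True
  | _, .hL _ => True

theorem AClosed.mono {A : ATm} : ∀ {k l : ℕ}, k ≤ l → AClosed k A → AClosed l A := by
  induction A with
  | var n => intro k l h; simp only [AClosed]; omega
  | lam A ih => intro k l h; simp only [AClosed]; exact ih (by omega)
  | app A B ih1 ih2 => intro k l h; simp only [AClosed]; exact And.imp (ih1 h) (ih2 h)
  | choice A B ih1 ih2 => intro k l h; simp only [AClosed]; exact And.imp (ih1 h) (ih2 h)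
  | hM => simp [AClosed]
  | hL => simp [AClosed]

theorem AClosed.asubst {V : ATm} (hV : AClosed 0 V) {A : ATm} : ∀ {k m : ℕ}, k ≤ m →
    AClosed (m + 1) A → AClosed m (asubst A k V) := by
  induction A with
  | var n =>
    intro k m h hA
    simp only [AClosed, LamPlus.asubst] at hA ⊢
    split_ifs
    · exact hV.mono (by omega)
    · simp only [AClosed]; omega
    · simp only [AClosed]; omega
  | lam A ih => intro k m h hA; exact ih (by omega) hA
  | app A B ih1 ih2 => intro k m h hA; exact ⟨ih1 h hA.1, ih2 h hA.2⟩
  | choice A B ih1 ih2 => intro k m h hA; exact ⟨ih1 h hA.1, ih2 h hA.2⟩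
  | hM => simp [AClosed, LamPlus.asubst]
  | hL => simp [AClosed, LamPlus.asubst]

/-- A term unaffected by substitution. -/
def Inv (m : LTm) : Prop := ∀ k s, subst m k s = m

theorem tr_asubst {m l} (hm : Inv m) (hl : ∀ i, Inv (l i)) (V A : ATm) : ∀ k,
    tr m l (asubst A k V) = subst (tr m l A) k (tr m l V) := by
  induction A with
  | var n => intro k; simp only [asubst, tr, subst]; split_ifs <;> simp [tr]
  | lam A ih => intro k; simp [asubst, tr, subst, ih]
  | app A B ih1 ih2 => intro k; simp [asubst, tr, subst, ih1, ih2]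
  | choice A B ih1 ih2 => intro k; simp [asubst, tr, subst, ih1, ih2]
  | hM => intro k; simp [asubst, tr, hm k]
  | hL i => intro k; simp [asubst, tr, hl i k]

theorem inv_Om : Inv Om := by intro k s; simp [Om, subst]
theorem inv_Idt : Inv Idt := by intro k s; simp [Idt, subst]
theorem inv_L0 : Inv L0 := by intro k s; simp [L0, Om, subst]
theorem inv_L1 : Inv L1 := by intro k s; simp [L1, Idt, subst]
theorem inv_Lt : Inv Lt := by intro k s; simp [Lt, Om, Idt, subst]
theorem inv_Mt : Inv Mt := by intro k s; simp [Mt, Om, Idt, subst]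
theorem inv_Nt : Inv Nt := by intro k s; simp [Nt, Om, Idt, subst]

inductive AVal : ATm → Prop
  | lam (A) : AVal (.lam A)
  | hM : AVal .hM
  | hL (i) : AVal (.hL i)

inductive AEC : (ATm → ATm) → Prop
  | id : AEC (fun R => R)
  | appL {c} (L) : AEC c → AEC (fun R => .app (c R) L)
  | appR {c V} : AVal V → AEC c → AEC (fun R => .app V (c R))

inductive ARedex : ATm → Prop
  | choice (A B) : ARedex (.choice A B)
  | app {V W} : AVal V → AVal W → ARedex (.app V W)

theorem decomp (T : ATm) : AClosed 0 T → AVal T ∨ ∃ C R, AEC C ∧ ARedex R ∧ T = C R := by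
  induction T with
  | var n => intro h; simp [AClosed] at h
  | lam A => intro _; exact .inl (.lam A)
  | hM => intro _; exact .inl .hM
  | hL i => intro _; exact .inl (.hL i)
  | choice A B => intro _; exact .inr ⟨_, _, .id, .choice A B, rfl⟩
  | app A B ihA ihB =>
    intro h
    right
    rcases ihA h.1 with hA | ⟨C, R, hC, hR, rfl⟩
    · rcases ihB h.2 with hB | ⟨C, R, hC, hR, rfl⟩
      · exact ⟨_, _, .id, .app hA hB, rfl⟩
      · exact ⟨_, R, .appR hA hC, hR, rfl⟩
    · exact ⟨_, R, .appL B hC, hR, rfl⟩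

theorem AEC.closed {C} (hC : AEC C) {R} (h : AClosed 0 (C R)) :
    AClosed 0 R ∧ ∀ R', AClosed 0 R' → AClosed 0 (C R') := by
  induction hC with
  | id => exact ⟨h, fun _ h => h⟩
  | appL L _ ih => exact ⟨(ih h.1).1, fun R' h' => ⟨(ih h.1).2 R' h', h.2⟩⟩
  | appR _ _ ih => exact ⟨(ih h.2).1, fun R' h' => ⟨h.1, (ih h.2).2 R' h'⟩⟩

/-- The index `i` does not occur. -/
def Fr (i : ℕ) : ATm → Prop
  | .var _ => True
  | .lam M => Fr i M
  | .app M N => Fr i M ∧ Fr i N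
  | .choice M N => Fr i M ∧ Fr i N
  | .hM => True
  | .hL j => j ≠ i

theorem exists_fr (T : ATm) : ∃ b, ∀ i, b ≤ i → Fr i T := by
  induction T with
  | var n => exact ⟨0, fun _ _ => trivial⟩
  | hM => exact ⟨0, fun _ _ => trivial⟩
  | hL j => exact ⟨j + 1, fun i h => by simp only [Fr]; omega⟩
  | lam A ih => exact ih
  | app A B ih1 ih2 =>
    obtain ⟨a, ha⟩ := ih1
    obtain ⟨b, hb⟩ := ih2
    exact ⟨max a b, fun i h => ⟨ha i (by omega), hb i (by omega)⟩⟩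
  | choice A B ih1 ih2 =>
    obtain ⟨a, ha⟩ := ih1
    obtain ⟨b, hb⟩ := ih2
    exact ⟨max a b, fun i h => ⟨ha i (by omega), hb i (by omega)⟩⟩

theorem tr_fr {m l l'} {i : ℕ} (h : ∀ j, j ≠ i → l j = l' j) (T : ATm) :
    Fr i T → tr m l T = tr m l' T := by
  induction T with
  | var n => intro _; rfl
  | hM => intro _; rfl
  | hL j => intro hj; exact h j hj
  | lam A ih => intro hf; simp only [tr]; rw [ih hf]
  | app A B ih1 ih2 => intro hf; simp only [tr]; rw [ih1 hf.1, ih2 hf.2]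
  | choice A B ih1 ih2 => intro hf; simp only [tr]; rw [ih1 hf.1, ih2 hf.2]

theorem AVal.tr_lam {m l V} (hm : IsVal m) (hl : ∀ i, IsVal (l i)) (hV : AVal V) :
    ∃ A, tr m l V = .lam A := by
  have : IsVal (tr m l V) := by
    cases hV with
    | lam A => exact .lam _
    | hM => exact hm
    | hL i => exact hl i
  cases h : tr m l V with
  | lam A => exact ⟨A, rfl⟩
  | _ => rw [h] at this; cases this

theorem AEC.tr_fr {m l l'} (hm : IsVal m) (hl : ∀ i, IsVal (l i)) {i : ℕ}
    (h : ∀ j, j ≠ i → l j = l' j) {C} (hC : AEC C) {R} (hf : Fr i (C R)) :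
    ∃ c, EC c ∧ (∀ R, tr m l (C R) = c (tr m l R)) ∧ (∀ R, tr m l' (C R) = c (tr m l' R)) := by
  induction hC with
  | id => exact ⟨_, .id, fun _ => rfl, fun _ => rfl⟩
  | appL L _ ih =>
    obtain ⟨c, h1, h2, h3⟩ := ih hf.1
    refine ⟨_, .appL (tr m l L) h1, fun R => ?_, fun R => ?_⟩
    · simp [tr, h2]
    · simp [tr, h3, LamPlus.tr_fr h L hf.2]
  | @appR C V hV _ ih =>
    obtain ⟨c, h1, h2, h3⟩ := ih hf.2
    obtain ⟨A, hA⟩ := hV.tr_lam hm hl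
    refine ⟨_, .appR A h1, fun R => ?_, fun R => ?_⟩
    · simp [tr, h2, hA]
    · simp [tr, h3, ← LamPlus.tr_fr h V hf.1, hA]

theorem AEC.tr {m l} (hm : IsVal m) (hl : ∀ i, IsVal (l i)) {C} (hC : AEC C) :
    ∃ c, EC c ∧ ∀ R, tr m l (C R) = c (tr m l R) := by
  obtain ⟨b, hb⟩ := exists_fr (C .hM)
  obtain ⟨c, h1, h2, _⟩ := hC.tr_fr (l' := l) hm hl (fun _ _ => rfl) (hb b le_rfl)
  exact ⟨c, h1, h2⟩

/-- Left translation. -/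
def lf (T : ATm) : LTm := tr Mt (fun _ => Lt) T

/-- The value of the hole `i`: `L₀` exactly for `i ∈ U`. -/
def lv (U : Finset ℕ) (i : ℕ) : LTm := if i ∈ U then L0 else L1

/-- Right translation. -/
def rt (U : Finset ℕ) (T : ATm) : LTm := tr Nt (lv U) T

theorem lv_val (U i) : IsVal (lv U i) := by
  unfold lv; split_ifs
  · exact .lam _
  · exact .lam _

theorem lv_inv (U i) : Inv (lv U i) := by
  unfold lv; split_ifs
  · exact inv_L0
  · exact inv_L1

theorem AEC.lf {C} (hC : AEC C) : ∃ c, EC c ∧ ∀ R, lf (C R) = c (lf R) :=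
  hC.tr (.lam _) (fun _ => .lam _)

theorem AEC.rt {C} (hC : AEC C) (U) : ∃ c, EC c ∧ ∀ R, rt U (C R) = c (rt U R) :=
  hC.tr (.lam _) (lv_val U)

theorem stp_beta (A B V : LTm) (hV : V = .lam B) : stp (.app (.lam A) V) = some [subst A 0 V] := by
  subst hV; simp [stp]

theorem main (k : ℕ) : ∀ (T : ATm) (S : Finset ℕ), AClosed 0 T →
    pr k (lf T) * 2 ^ S.card ≤ ∑ U ∈ S.powerset, pr (2 * k) (rt U T) := by
  induction k with
  | zero => intro T S _; simp [pr]
  | succ k ih =>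
    intro T S hT
    have e2 : 2 * (k + 1) = 2 * k + 1 + 1 := by ring
    rw [e2]
    rcases decomp T hT with hV | ⟨C, R, hC, hR, rfl⟩
    · obtain ⟨A, hA⟩ := hV.tr_lam (m := Mt) (l := fun _ => Lt) (.lam _) (fun _ => .lam _)
      have h1 : ∀ U ∈ S.powerset, pr (2 * k + 1 + 1) (rt U T) = 1 := by
        intro U _
        obtain ⟨B, hB⟩ := hV.tr_lam (m := Nt) (l := lv U) (.lam _) (lv_val U)
        rw [rt, hB, pr_lam]
      rw [Finset.sum_congr rfl h1, lf, hA, pr_lam]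
      simp
    · obtain ⟨hRc, hCc⟩ := hC.closed hT
      obtain ⟨c, hc, hcl⟩ := hC.lf
      choose d hd hdr using fun U => hC.rt U
      cases hR with
      | choice A B =>
        have hl : pr (k + 1) (lf (C (.choice A B))) =
            2⁻¹ * (pr k (lf (C A)) + pr k (lf (C B))) := by
          rw [hcl, hcl, hcl]; exact hc.pr_choice _ _ k
        have hr : ∀ U, 2⁻¹ * (pr (2 * k) (rt U (C A)) + pr (2 * k) (rt U (C B))) ≤
            pr (2 * k + 1 + 1) (rt U (C (.choice A B))) := by
          intro U
          refine le_trans (le_of_eq ?_) (pr_mono_succ _ _)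
          rw [hdr, hdr, hdr]; exact ((hd U).pr_choice _ _ _).symm
        refine le_trans ?_ (Finset.sum_le_sum fun U _ => hr U)
        rw [hl, ← Finset.mul_sum, Finset.sum_add_distrib, mul_assoc, add_mul]
        gcongr
        · exact ih _ _ (hCc _ hRc.1)
        · exact ih _ _ (hCc _ hRc.2)
      | @app V W hV hW =>
        obtain ⟨Wl, hWl⟩ := hW.tr_lam (m := Mt) (l := fun _ => Lt) (.lam _) (fun _ => .lam _)
        choose Wr hWr using fun U => hW.tr_lam (m := Nt) (l := lv U) (.lam _) (lv_val U)
        cases hV with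
        | lam A =>
          have hl : pr (k + 1) (lf (C (.app (.lam A) W))) = pr k (lf (C (asubst A 0 W))) := by
            rw [hcl, hcl]
            refine hc.pr_one k ?_
            rw [lf, lf, tr_asubst inv_Mt (fun _ => inv_Lt)]
            exact stp_beta _ _ _ hWl
          have hr : ∀ U, pr (2 * k) (rt U (C (asubst A 0 W))) ≤
              pr (2 * k + 1 + 1) (rt U (C (.app (.lam A) W))) := by
            intro U
            refine le_trans (le_of_eq ?_) (pr_mono_succ _ _)
            rw [hdr, hdr]
            refine ((hd U).pr_one _ ?_).symm
            rw [rt, rt, tr_asubst inv_Nt (lv_inv U)]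
            exact stp_beta _ _ _ (hWr U)
          refine le_trans ?_ (Finset.sum_le_sum fun U _ => hr U)
          rw [hl]
          exact ih _ _ (hCc _ (hRc.2.asubst le_rfl hRc.1))
        | hM =>
          obtain ⟨b, hb⟩ := exists_fr (C (.app .hM W))
          obtain ⟨i, hi, hiS⟩ : ∃ i, b ≤ i ∧ i ∉ S :=
            ⟨max b (S.sup id + 1), le_max_left _ _, fun h => by
              have := Finset.le_sup (f := id) h
              simp only [id] at this
              omega⟩
          have hl : pr (k + 1) (lf (C (.app .hM W))) = pr k (lf (C (.hL i))) := by
            rw [hcl, hcl]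
            refine hc.pr_one k ?_
            have := stp_beta Lt _ _ hWl
            rwa [inv_Lt] at this
          have hr : ∀ U ∈ S.powerset, 2⁻¹ * (pr (2 * k) (rt U (C (.hL i))) +
              pr (2 * k) (rt (insert i U) (C (.hL i)))) ≤
              pr (2 * k + 1 + 1) (rt U (C (.app .hM W))) := by
            intro U hU
            have hiU : i ∉ U := fun h => hiS (Finset.mem_powerset.1 hU h)
            obtain ⟨e, he, he1, he2⟩ := hC.tr_fr (m := Nt) (l := lv U) (l' := lv (insert i U))
              (.lam _) (lv_val U) (i := i) (by intro j hj; simp [lv, hj]) (hb i hi)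
            have e1 : rt U (C (.hL i)) = e L1 := by
              rw [rt, he1]; simp [tr, lv, hiU]
            have e3 : rt (insert i U) (C (.hL i)) = e L0 := by
              rw [rt, he2]; simp [tr, lv]
            have e4 : rt U (C (.app .hM W)) = e (.app Nt (tr Nt (lv U) W)) := by
              rw [rt, he1]; simp [tr]
            have e5 : stp (.app Nt (tr Nt (lv U) W)) = some [.choice L0 L1] := by
              have h := stp_beta (.choice L0 L1) _ _ (hWr U)
              rw [subst, inv_L0, inv_L1] at h
              exact h
            rw [e1, e3, e4, he.pr_one _ e5, he.pr_choice, add_comm]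
          refine le_trans ?_ (Finset.sum_le_sum hr)
          have := ih (C (.hL i)) (insert i S) (hCc _ trivial)
          rw [Finset.sum_powerset_insert hiS, Finset.card_insert_of_notMem hiS,
            ← Finset.sum_add_distrib] at this
          rw [hl, ← Finset.mul_sum]
          refine le_trans (le_of_eq ?_) (mul_le_mul_right this 2⁻¹)
          rw [pow_succ, mul_comm (2⁻¹), mul_assoc, mul_assoc,
            ENNReal.mul_inv_cancel (by simp) (by simp), mul_one]
        | hL i =>
          have hl : pr (k + 1) (lf (C (.app (.hL i) W))) ≤
              2⁻¹ * pr k (lf (C (.lam (.var 0)))) := by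
            rw [hcl, hcl]
            have e5 : stp (lf (.app (.hL i) W)) = some [.choice Om Idt] := by
              have h := stp_beta (.choice Om Idt) _ _ hWl
              rw [subst, inv_Om, inv_Idt] at h
              exact h
            rw [hc.pr_one k e5]
            refine (pr_mono_succ _ _).trans ?_
            rw [hc.pr_choice, hc.pr_Om, zero_add]
            exact le_rfl
          have hr : ∀ U ∈ (S.erase i).powerset, pr (2 * k) (rt U (C (.lam (.var 0)))) ≤
              pr (2 * k + 1 + 1) (rt U (C (.app (.hL i) W))) := by
            intro U hU
            have hiU : i ∉ U := fun h =>
              (Finset.notMem_erase i S) (Finset.mem_powerset.1 hU h)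
            refine le_trans (le_of_eq ?_) (pr_mono_succ _ _)
            rw [hdr, hdr]
            refine ((hd U).pr_one _ ?_).symm
            have h := stp_beta Idt _ _ (hWr U)
            rw [inv_Idt] at h
            have e6 : rt U (.app (.hL i) W) = .app L1 (tr Nt (lv U) W) := by
              simp [rt, tr, lv, hiU]
            rw [e6]
            exact h
          have h1 := (ih (C (.lam (.var 0))) (S.erase i) (hCc _ (by simp [AClosed]))).trans
            (Finset.sum_le_sum hr)
          have h2 := h1.trans (Finset.sum_le_sum_of_subset
            (Finset.powerset_mono.2 (Finset.erase_subset i S)))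
          refine le_trans ?_ h2
          refine (mul_le_mul_left hl _).trans ?_
          rw [mul_comm (2⁻¹), mul_assoc]
          gcongr
          have h3 : S.card ≤ (S.erase i).card + 1 := by
            have := Finset.pred_card_le_card_erase (s := S) (a := i); omega
          calc (2⁻¹ : ℝ≥0∞) * 2 ^ S.card ≤ 2⁻¹ * 2 ^ ((S.erase i).card + 1) := by
                gcongr
                exact one_le_two
            _ = 2 ^ (S.erase i).card := by
                rw [pow_succ, mul_comm, mul_assoc, ENNReal.mul_inv_cancel (by simp) (by simp),
                  mul_one]

def emb : LTm → ATm
  | .var n => .var n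
  | .lam A => .lam (emb A)
  | .app A B => .app (emb A) (emb B)
  | .choice A B => .choice (emb A) (emb B)

theorem tr_emb (m l P) : tr m l (emb P) = P := by
  induction P <;> simp_all [emb, tr]

theorem closed_emb (P : LTm) : ∀ k, ClosedUnder k P → AClosed k (emb P) := by
  induction P with
  | var n => intro k h; exact h
  | lam A ih => intro k h; exact ih _ h
  | app A B ih1 ih2 => intro k h; exact ⟨ih1 _ h.1, ih2 _ h.2⟩
  | choice A B ih1 ih2 => intro k h; exact ⟨ih1 _ h.1, ih2 _ h.2⟩

def amsubst : ATm → List ATm → ATm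
  | M, [] => M
  | M, V :: vs => amsubst (asubst M 0 V) vs

theorem tr_amsubst {m l} (hm : Inv m) (hl : ∀ i, Inv (l i)) (vs : List ATm) : ∀ A,
    tr m l (amsubst A vs) = msubst (tr m l A) (vs.map (tr m l)) := by
  induction vs with
  | nil => intro A; rfl
  | cons V vs ih => intro A; simp [amsubst, msubst, ih, tr_asubst hm hl]

theorem closed_amsubst (vs : List ATm) : ∀ A, AClosed vs.length A → (∀ V ∈ vs, AClosed 0 V) →
    AClosed 0 (amsubst A vs) := by
  induction vs with
  | nil => intro A h _; exact h
  | cons V vs ih =>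
    intro A h hv
    exact ih _ ((hv V (by simp)).asubst (Nat.zero_le _) h) (fun W hW => hv W (by simp [hW]))

theorem part1 (n : ℕ) (P : LTm) (hP : ClosedUnder (n + 1) P) (p : ℝ≥0∞)
    (hp : Conv (msubst P (Mt :: List.replicate n Lt)) p) :
      ∃ pb : (Fin n → Bool) → ℝ≥0∞,
        (∀ b : Fin n → Bool,
          Conv (msubst P (Nt :: List.ofFn fun i => if b i then L1 else L0)) (pb b)) ∧
        p ≤ (∑ b : Fin n → Bool, pb b) / 2 ^ n := by
  obtain ⟨D, hD, rfl⟩ := hp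
  obtain ⟨k, hk⟩ := le_pr hD
  refine ⟨_, fun b => conv_pr (2 * k) _, hk.trans ?_⟩
  set vs : List ATm := .hM :: List.ofFn fun i : Fin n => .hL i with hvs
  have hcl : AClosed 0 (amsubst (emb P) vs) := by
    refine closed_amsubst _ _ (closed_emb _ _ (by simpa [hvs] using hP)) ?_
    intro V hV
    simp only [hvs, List.mem_cons, List.mem_ofFn] at hV
    rcases hV with rfl | ⟨i, rfl⟩ <;> trivial
  have hlf : lf (amsubst (emb P) vs) = msubst P (Mt :: List.replicate n Lt) := by
    rw [lf, tr_amsubst inv_Mt (fun _ => inv_Lt), tr_emb]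
    congr 1
    simp only [hvs, List.map_cons, tr, List.map_ofFn]
    congr 1
    rw [← List.ofFn_const]
    rfl
  have hrt : ∀ U, rt U (amsubst (emb P) vs) =
      msubst P (Nt :: List.ofFn fun i : Fin n => if decide ((i : ℕ) ∉ U) then L1 else L0) := by
    intro U
    rw [rt, tr_amsubst inv_Nt (lv_inv U), tr_emb]
    congr 1
    simp only [hvs, List.map_cons, tr, List.map_ofFn]
    congr 2
    funext i
    by_cases h : (i : ℕ) ∈ U <;> simp [tr, lv, h]
  have hm := main k _ (Finset.range n) hcl
  rw [hlf, Finset.card_range] at hm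
  rw [ENNReal.le_div_iff_mul_le (by simp) (by simp)]
  refine hm.trans (le_of_eq ?_)
  refine Finset.sum_bij' (fun U _ => fun i : Fin n => decide ((i : ℕ) ∉ U))
    (fun b _ => (Finset.range n).filter fun j => ∃ h : j < n, b ⟨j, h⟩ = false) ?_ ?_ ?_ ?_ ?_
  · intro U _; simp
  · intro b _; simp
  · intro U hU
    ext j
    have := Finset.mem_powerset.1 hU
    simp only [Finset.mem_filter, Finset.mem_range]
    constructor
    · rintro ⟨_, _, h⟩; simpa using h
    · intro h; have h' := Finset.mem_range.1 (this h); exact ⟨h', h', by simpa using h⟩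
  · intro b _
    funext i
    cases h : b i <;> simp [h]
  · intro U _; rw [hrt]

/-- if `P[M/x, L/ȳ]` converges with probability `p`, then for every
bit-vector `b ∈ {0,1}ⁿ` there is `p_b` such that `P[N/x, L_b/ȳ]` converges with
probability `p_b` and `p ≤ (∑_b p_b) / 2ⁿ`.  In particular (`n = 0`), for every `P`
with one free variable, the convergence probability of `P[M/x]` is bounded by a
convergence probability of `P[N/x]`. -/
theorem stmt19 :
    (∀ (n : ℕ) (P : LTm), ClosedUnder (n + 1) P → ∀ p : ℝ≥0∞,
      Conv (msubst P (Mt :: List.replicate n Lt)) p →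
      ∃ pb : (Fin n → Bool) → ℝ≥0∞,
        (∀ b : Fin n → Bool,
          Conv (msubst P (Nt :: List.ofFn fun i => if b i then L1 else L0)) (pb b)) ∧
        p ≤ (∑ b : Fin n → Bool, pb b) / 2 ^ n) ∧
    (∀ P : LTm, ClosedUnder 1 P → ∀ p : ℝ≥0∞,
      Conv (subst P 0 Mt) p → ∃ q, p ≤ q ∧ Conv (subst P 0 Nt) q) := by
  refine ⟨part1, fun P hP p hp => ?_⟩
  obtain ⟨pb, h1, h2⟩ := part1 0 P hP p hp
  refine ⟨pb default, ?_, h1 default⟩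
  rw [Fintype.sum_unique, pow_zero, div_one] at h2
  exact h2.trans (le_of_eq (congrArg pb (Subsingleton.elim _ _)))

end LamPlus
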